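/- Let δ̄ ≠ 0 and let h, U, u_e, p, δ₁, δ₂, δ₁*, τ̄_b : ℝ² → ℝ be differentiable functions of (t,x), with u_e never zero. Assume at every point: (i) ∂_t u_e + u_e ∂_x u_e = −∂_x p; (ii) ∂_t h + ∂_x(hU) = 0; (iii) ∂_t(hU) + ∂_x((h − δ̄(δ₁ + δ₂)) u_e²) = −h ∂_x p − δ̄ τ̄_b; (iv) the von Kármán equation ∂_t(u_e δ₁) + u_e δ₁ ∂_x u_e + ∂_x(u_e² δ₂) = τ̄_b holds for δ₁, δ₂; and (v) δ₁* is defined by the displacement-thickness relation hU = (h − δ̄ δ₁*) u_e. Then ∂_t(u_e (δ₁ − δ₁*)) − u_e ∂_x(u_e (δ₁ − δ₁*)) = 0 at every point; i.e. the discrepancy u_e(δ₁ − δ₁*) between the two definitions of the displacement thickness is transported along the characteristics of the ideal fluid. -/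

import Mathlib

/-- Partial derivative in the first coordinate (time) of a function on ℝ². -/
noncomputable def pt2 (f : ℝ × ℝ → ℝ) (q : ℝ × ℝ) : ℝ :=
  deriv (fun s => f (s, q.2)) q.1

/-- Partial derivative in the second coordinate (space) of a function on ℝ². -/
noncomputable def px2 (f : ℝ × ℝ → ℝ) (q : ℝ × ℝ) : ℝ :=
  deriv (fun s => f (q.1, s)) q.2

/-!
Write `w = u_e`, `σ = δ₁ + δ₂`. The Euler equation and mass conservation, inserted into the
momentum balance, turn the displacement-thickness relation into
`∂_t(w δ₁*) - w ∂_x(w δ₁*) = τ̄_b - ∂_x(w² σ)`. The von Kármán equation is the same equation for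
`δ₁`, because `w δ₁ ∂_x w = ∂_x(w² δ₁) - w ∂_x(w δ₁)`. The source terms cancel in the difference.
-/

open Filter Topology

section PartialDerivatives

variable {f g : ℝ × ℝ → ℝ} {q : ℝ × ℝ}

lemma hasDerivAt_pt2 (hf : DifferentiableAt ℝ f q) :
    HasDerivAt (fun s => f (s, q.2)) (pt2 f q) q.1 :=
  (DifferentiableAt.fun_comp' q.1 (g := f) (f := fun s => (s, q.2)) hf (by fun_prop)).hasDerivAt

lemma hasDerivAt_px2 (hf : DifferentiableAt ℝ f q) :
    HasDerivAt (fun s => f (q.1, s)) (px2 f q) q.2 :=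
  (DifferentiableAt.fun_comp' q.2 (g := f) (f := fun s => (q.1, s)) hf (by fun_prop)).hasDerivAt

lemma pt2_congr (hfg : f =ᶠ[𝓝 q] g) : pt2 f q = pt2 g q :=
  EventuallyEq.deriv_eq ((Continuous.prodMk_left q.2).tendsto q.1 |>.eventually hfg)

lemma px2_congr (hfg : f =ᶠ[𝓝 q] g) : px2 f q = px2 g q :=
  EventuallyEq.deriv_eq ((Continuous.prodMk_right q.1).tendsto q.2 |>.eventually hfg)

lemma pt2_sub (hf : DifferentiableAt ℝ f q) (hg : DifferentiableAt ℝ g q) :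
    pt2 (fun r => f r - g r) q = pt2 f q - pt2 g q :=
  ((hasDerivAt_pt2 hf).sub (hasDerivAt_pt2 hg)).deriv

lemma px2_sub (hf : DifferentiableAt ℝ f q) (hg : DifferentiableAt ℝ g q) :
    px2 (fun r => f r - g r) q = px2 f q - px2 g q :=
  ((hasDerivAt_px2 hf).sub (hasDerivAt_px2 hg)).deriv

lemma px2_add (hf : DifferentiableAt ℝ f q) (hg : DifferentiableAt ℝ g q) :
    px2 (fun r => f r + g r) q = px2 f q + px2 g q :=
  ((hasDerivAt_px2 hf).add (hasDerivAt_px2 hg)).deriv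

lemma pt2_const_mul (c : ℝ) : pt2 (fun r => c * f r) q = c * pt2 f q :=
  deriv_const_mul_field c

lemma px2_const_mul (c : ℝ) : px2 (fun r => c * f r) q = c * px2 f q :=
  deriv_const_mul_field c

lemma pt2_mul (hf : DifferentiableAt ℝ f q) (hg : DifferentiableAt ℝ g q) :
    pt2 (fun r => f r * g r) q = pt2 f q * g q + f q * pt2 g q :=
  ((hasDerivAt_pt2 hf).mul (hasDerivAt_pt2 hg)).deriv

lemma px2_mul (hf : DifferentiableAt ℝ f q) (hg : DifferentiableAt ℝ g q) :
    px2 (fun r => f r * g r) q = px2 f q * g q + f q * px2 g q :=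
  ((hasDerivAt_px2 hf).mul (hasDerivAt_px2 hg)).deriv

end PartialDerivatives

/-- The transport operator `∂_t - w ∂_x` of the displacement equations. Note the sign: it
differentiates along the curves `dx/dt = -w`. -/
noncomputable def backwardTransport (w f : ℝ × ℝ → ℝ) (q : ℝ × ℝ) : ℝ :=
  pt2 f q - w q * px2 f q

section Transport

variable {w f g h U δ₁ δ₂ δs σ : ℝ × ℝ → ℝ} {q : ℝ × ℝ} {δb G τ : ℝ}

lemma backwardTransport_sub (hf : DifferentiableAt ℝ f q) (hg : DifferentiableAt ℝ g q) :
    backwardTransport w (fun r => f r - g r) q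
      = backwardTransport w f q - backwardTransport w g q := by
  simp only [backwardTransport, pt2_sub hf hg, px2_sub hf hg]
  ring

lemma px2_sq_mul (hw : DifferentiableAt ℝ w q) (hf : DifferentiableAt ℝ f q) :
    px2 (fun r => w r ^ 2 * f r) q = w q * px2 (fun r => w r * f r) q + w q * f q * px2 w q := by
  have hassoc : (fun r => w r ^ 2 * f r) = fun r => w r * (w r * f r) := by
    funext r
    ring
  rw [hassoc, px2_mul hw (hw.fun_mul hf)]
  ring

lemma momentum_balance_eq_advective_form
    (hw : DifferentiableAt ℝ w q) (hh : DifferentiableAt ℝ h q) :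
    pt2 (fun r => w r * h r) q + px2 (fun r => w r ^ 2 * h r) q
      = w q * (pt2 h q + px2 (fun r => w r * h r) q) + h q * (pt2 w q + w q * px2 w q) := by
  rw [px2_sq_mul hw hh, pt2_mul hw hh]
  ring

lemma backwardTransport_of_vonKarman (hw : DifferentiableAt ℝ w q)
    (hδ₁ : DifferentiableAt ℝ δ₁ q) (hδ₂ : DifferentiableAt ℝ δ₂ q)
    (hVK : pt2 (fun r => w r * δ₁ r) q + w q * δ₁ q * px2 w q
      + px2 (fun r => w r ^ 2 * δ₂ r) q = τ) :
    backwardTransport w (fun r => w r * δ₁ r) q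
      = τ - px2 (fun r => w r ^ 2 * (δ₁ r + δ₂ r)) q := by
  have hflux : px2 (fun r => w r ^ 2 * (δ₁ r + δ₂ r)) q
      = px2 (fun r => w r ^ 2 * δ₁ r) q + px2 (fun r => w r ^ 2 * δ₂ r) q := by
    simp only [mul_add]
    exact px2_add (by fun_prop) (by fun_prop)
  rw [backwardTransport, hflux, px2_sq_mul hw hδ₁]
  linear_combination hVK

lemma backwardTransport_of_shallowWater (hδb : δb ≠ 0)
    (hh : DifferentiableAt ℝ h q) (hw : DifferentiableAt ℝ w q)
    (hσ : DifferentiableAt ℝ σ q) (hδs : DifferentiableAt ℝ δs q)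
    (hEuler : pt2 w q + w q * px2 w q = -G)
    (hmass : pt2 h q + px2 (fun r => h r * U r) q = 0)
    (hmom : pt2 (fun r => h r * U r) q + px2 (fun r => (h r - δb * σ r) * w r ^ 2) q
      = -h q * G - δb * τ)
    (hdisp : ∀ᶠ r in 𝓝 q, h r * U r = (h r - δb * δs r) * w r) :
    backwardTransport w (fun r => w r * δs r) q = τ - px2 (fun r => w r ^ 2 * σ r) q := by
  have hdischarge : (fun r => h r * U r) =ᶠ[𝓝 q] fun r => w r * h r - δb * (w r * δs r) := by
    filter_upwards [hdisp] with r hr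
    rw [hr]
    ring
  have hdischarge_t : pt2 (fun r => h r * U r) q
      = pt2 (fun r => w r * h r) q - δb * pt2 (fun r => w r * δs r) q := by
    rw [pt2_congr hdischarge, pt2_sub (by fun_prop) (by fun_prop), pt2_const_mul]
  have hdischarge_x : px2 (fun r => h r * U r) q
      = px2 (fun r => w r * h r) q - δb * px2 (fun r => w r * δs r) q := by
    rw [px2_congr hdischarge, px2_sub (by fun_prop) (by fun_prop), px2_const_mul]
  have hflux : px2 (fun r => (h r - δb * σ r) * w r ^ 2) q
      = px2 (fun r => w r ^ 2 * h r) q - δb * px2 (fun r => w r ^ 2 * σ r) q := by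
    have hexpand : (fun r => (h r - δb * σ r) * w r ^ 2)
        = fun r => w r ^ 2 * h r - δb * (w r ^ 2 * σ r) := by
      funext r
      ring
    rw [hexpand, px2_sub (by fun_prop) (by fun_prop), px2_const_mul]
  rw [hdischarge_x] at hmass
  rw [hdischarge_t, hflux] at hmom
  apply mul_left_cancel₀ hδb
  rw [backwardTransport]
  linear_combination momentum_balance_eq_advective_form hw hh + w q * hmass + h q * hEuler - hmom

theorem displacement_discrepancy_transported_general (hδb : δb ≠ 0)
    (hh : DifferentiableAt ℝ h q) (hw : DifferentiableAt ℝ w q)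
    (hδ₁ : DifferentiableAt ℝ δ₁ q) (hδ₂ : DifferentiableAt ℝ δ₂ q)
    (hδs : DifferentiableAt ℝ δs q)
    (hEuler : pt2 w q + w q * px2 w q = -G)
    (hmass : pt2 h q + px2 (fun r => h r * U r) q = 0)
    (hmom : pt2 (fun r => h r * U r) q + px2 (fun r => (h r - δb * (δ₁ r + δ₂ r)) * w r ^ 2) q
      = -h q * G - δb * τ)
    (hVK : pt2 (fun r => w r * δ₁ r) q + w q * δ₁ q * px2 w q
      + px2 (fun r => w r ^ 2 * δ₂ r) q = τ)
    (hdisp : ∀ᶠ r in 𝓝 q, h r * U r = (h r - δb * δs r) * w r) :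
    backwardTransport w (fun r => w r * (δ₁ r - δs r)) q = 0 := by
  have hδs_transport := backwardTransport_of_shallowWater (σ := fun r => δ₁ r + δ₂ r)
    hδb hh hw (by fun_prop) hδs hEuler hmass hmom hdisp
  simp only [mul_sub]
  rw [backwardTransport_sub (hw.fun_mul hδ₁) (hw.fun_mul hδs),
    backwardTransport_of_vonKarman hw hδ₁ hδ₂ hVK, hδs_transport, sub_self]

end Transport

/-- If the extended shallow water system (with closed flux) and the von Kármán
equation hold for `δ₁, δ₂`, and `δ₁*` is defined by the displacement-thickness
relation `hU = (h − δ̄δ₁*)u_e`, then the discrepancy `u_e(δ₁ − δ₁*)` is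
transported along the characteristics of the ideal fluid:
`∂_t(u_e(δ₁ − δ₁*)) − u_e ∂_x(u_e(δ₁ − δ₁*)) = 0`. -/
theorem displacement_discrepancy_transported
    (δb : ℝ) (hδb : δb ≠ 0) (h U ue p δ₁ δ₂ δ₁s τb : ℝ × ℝ → ℝ)
    (hdh : Differentiable ℝ h) (hdU : Differentiable ℝ U)
    (hdue : Differentiable ℝ ue) (hdp : Differentiable ℝ p)
    (hdδ₁ : Differentiable ℝ δ₁) (hdδ₂ : Differentiable ℝ δ₂)
    (hdδ₁s : Differentiable ℝ δ₁s) (hdτ : Differentiable ℝ τb)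
    (hue0 : ∀ q : ℝ × ℝ, ue q ≠ 0)
    -- (i) ideal fluid momentum
    (hEuler : ∀ q : ℝ × ℝ, pt2 ue q + ue q * px2 ue q = - px2 p q)
    -- (ii) mass conservation
    (hmass : ∀ q : ℝ × ℝ, pt2 h q + px2 (fun q => h q * U q) q = 0)
    -- (iii) momentum conservation with closed flux
    (hmom : ∀ q : ℝ × ℝ,
      pt2 (fun q => h q * U q) q
        + px2 (fun q => (h q - δb * (δ₁ q + δ₂ q)) * (ue q) ^ 2) q
      = - h q * px2 p q - δb * τb q)
    -- (iv) von Kármán equation for δ₁, δ₂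
    (hVK : ∀ q : ℝ × ℝ,
      pt2 (fun q => ue q * δ₁ q) q + ue q * δ₁ q * px2 ue q
        + px2 (fun q => (ue q) ^ 2 * δ₂ q) q = τb q)
    -- (v) displacement-thickness relation defining δ₁*
    (hdisp : ∀ q : ℝ × ℝ, h q * U q = (h q - δb * δ₁s q) * ue q) :
    ∀ q : ℝ × ℝ,
      pt2 (fun q => ue q * (δ₁ q - δ₁s q)) q
        - ue q * px2 (fun q => ue q * (δ₁ q - δ₁s q)) q = 0 := by
  exact fun q => displacement_discrepancy_transported_general hδb (hdh q) (hdue q) (hdδ₁ q) (hdδ₂ q)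
    (hdδ₁s q) (hEuler q) (hmass q) (hmom q) (hVK q) (.of_forall hdisp)
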